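/- arXiv:2506.22428 — 2 statements merged into one kernel-verified Lean document; each statement's English description precedes it below -/
import Mathlib

section
/- For an IPPA sequence on a proper, convex, lower semicontinuous function h with errors and step sizes satisfying (A1)–(A5), the conjugate values along the exact proximal subgradients converge in ℝ ∪ {+∞}: h*(s⋆^k) → h*(s̄), where s̄ is the element of minimal norm in cl(range ∂h). -/
open scoped RealInnerProductSpace
open Filter Asymptotics

noncomputable section

/-- The Fenchel conjugate of an `EReal`-valued function on a real inner product space. -/
def fenchel {Y : Type*} [NormedAddCommGroup Y] [InnerProductSpace ℝ Y]
    (h : Y → EReal) (s : Y) : EReal :=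
  ⨆ l : Y, ((⟪s, l⟫ : ℝ) : EReal) - h l

/-- The convex subdifferential of an `EReal`-valued function: `v ∈ ∂h(u)` iff
`h w ≥ h u + ⟪v, w − u⟫` for all `w`. -/
def subdiff {Y : Type*} [NormedAddCommGroup Y] [InnerProductSpace ℝ Y]
    (h : Y → EReal) (u : Y) : Set Y :=
  {v : Y | ∀ w : Y, h u + ((⟪v, w - u⟫ : ℝ) : EReal) ≤ h w}

/-!
Every exact subgradient `s⋆ᵏ ∈ ∂h(λ⋆ᵏ)` satisfies `h*(s⋆ᵏ) ≤ h*(s̄) + ⟪s⋆ᵏ - s̄, λ⋆ᵏ⟫`, because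
`λ⋆ᵏ ∈ ∂h*(s⋆ᵏ)`. As `h*` is lower semicontinuous, it suffices that `s⋆ᵏ → s̄` and, when `h*(s̄)`
is finite, that the upper limit of the inner products is nonpositive. Let `Γ` denote the sum of the
step sizes.

* Monotonicity of `∂h` makes `‖s⋆ᵏ‖` decreasing up to a summable error, hence convergent.
  Telescoping the subgradient inequality bounds `∑ γ (‖s⋆‖² - ‖v‖²)` for each `v ∈ dom h*`, so the
  limit is at most `‖v‖`. Hence `‖s⋆ᵏ‖ → ‖s̄‖`, and the variational inequality of the projection
  gives `s⋆ᵏ → s̄`. If `s̄ ∈ dom h*`, the same bound yields the rate `‖s⋆ᵏ - s̄‖ = O(1/√Γ)`.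
* If `s̄ ∈ dom h*`, then `λ⋆ᵏ + Γ s̄ = o(√Γ)`: up to the errors, the squared distance of
  `λᵏ + Γ s̄` to a `δ`-minimizer of `h - ⟪s̄, ·⟫` grows by at most `2δγ` per step, and `δ > 0` is
  arbitrary.

Since `⟪s⋆ᵏ - s̄, s̄⟫ ≥ 0`, the inner product is at most `⟪s⋆ᵏ - s̄, λ⋆ᵏ + Γ s̄⟫`, which is
`O(1/√Γ) · o(√Γ) = o(1)`.
-/

section RealSequences

open Finset

lemma exists_tendsto_of_le_add_of_summable {a η : ℕ → ℝ} (ha : BddBelow (Set.range a))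
    (hη : Summable η) (hstep : ∀ n, a (n + 1) ≤ a n + η n) : ∃ l, Tendsto a atTop (nhds l) := by
  have hsum := hη.hasSum.tendsto_sum_nat
  have hanti : Antitone fun n => a n - ∑ k ∈ range n, η k :=
    antitone_nat_of_succ_le fun n => by
      rw [sum_range_succ]
      linarith [hstep n]
  obtain ⟨m, hm⟩ := ha
  obtain ⟨M, hM⟩ := hsum.bddAbove_range
  have hbdd : BddBelow (Set.range fun n => a n - ∑ k ∈ range n, η k) := by
    refine ⟨m - M, ?_⟩
    rintro _ ⟨n, rfl⟩
    exact sub_le_sub (hm ⟨n, rfl⟩) (hM ⟨n, rfl⟩)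
  exact ⟨_, by simpa using (tendsto_atTop_ciInf hanti hbdd).add hsum⟩

lemma nonpos_of_tendsto_of_frequently_sum_mul_le {γ b : ℕ → ℝ} {β C : ℝ} (hγ : ∀ n, 0 ≤ γ n)
    (hdiv : Tendsto (fun n => ∑ k ∈ range n, γ k) atTop atTop) (hb : Tendsto b atTop (nhds β))
    (hC : ∃ᶠ n in atTop, ∑ k ∈ range n, γ k * b k ≤ C) : β ≤ 0 := by
  by_contra! hβ
  have hsmall : (fun n => γ n * (b n - β)) =o[atTop] γ := by
    have hb0 : (fun n => b n - β) =o[atTop] fun _ => (1 : ℝ) :=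
      (isLittleO_one_iff ℝ).2 (tendsto_sub_nhds_zero_iff.2 hb)
    simpa using (isBigO_refl γ atTop).mul_isLittleO hb0
  have hmean := (hsmall.sum_range hγ hdiv).def (half_pos hβ)
  obtain ⟨n, hn, hmean_n, hlarge⟩ :=
    (hC.and_eventually (hmean.and (hdiv.eventually_gt_atTop (C / (β / 2))))).exists
  simp only [mul_sub, sum_sub_distrib, ← sum_mul] at hmean_n
  rw [Real.norm_of_nonneg (sum_nonneg fun k _ => hγ k)] at hmean_n
  rw [div_lt_iff₀ (half_pos hβ)] at hlarge
  linarith [neg_le_of_abs_le hmean_n]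

lemma sum_mul_le_of_le_add {γ u η : ℕ → ℝ} (hγ : ∀ n, 0 ≤ γ n)
    (hu : ∀ n, u (n + 1) ≤ u n + η n) (n : ℕ) :
    (∑ i ∈ range (n + 1), γ i) * u n ≤
      ∑ k ∈ range (n + 1), γ k * u k + ∑ k ∈ range n, η k * ∑ i ∈ range (k + 1), γ i := by
  induction n with
  | zero => simp
  | succ n ih =>
    have hΓ : 0 ≤ ∑ i ∈ range (n + 1), γ i := sum_nonneg fun i _ => hγ i
    rw [sum_range_succ γ, sum_range_succ (fun k => γ k * u k),
      sum_range_succ (fun k => η k * ∑ i ∈ range (k + 1), γ i)]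
    linarith [mul_le_mul_of_nonneg_left (hu n) hΓ]

lemma sqrt_add_sqrt_sq_add_le {E A c : ℝ} (hE : 0 ≤ E) (hA : 0 ≤ A) (hc : 0 ≤ c) :
    √((E + √A) ^ 2 + c) ≤ E + √(A + c) := by
  have hmono : E * √A ≤ E * √(A + c) :=
    mul_le_mul_of_nonneg_left (Real.sqrt_le_sqrt (by linarith)) hE
  refine Real.sqrt_le_iff.2 ⟨by positivity, ?_⟩
  linear_combination 2 * hmono + Real.sq_sqrt hA - Real.sq_sqrt (add_nonneg hA hc)

lemma le_sum_add_sqrt_of_sq_le_sq_add {a b e c : ℕ → ℝ} (ha : ∀ n, 0 ≤ a n) (hc : ∀ n, 0 ≤ c n)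
    (he : ∀ n, 0 ≤ e n) (hb : ∀ n, b n ^ 2 ≤ a n ^ 2 + c n) (hstep : ∀ n, a (n + 1) ≤ b n + e n)
    (n : ℕ) : b n ≤ ∑ k ∈ range n, e k + √(a 0 ^ 2 + ∑ k ∈ range (n + 1), c k) := by
  induction n with
  | zero => simpa using Real.le_sqrt_of_sq_le (hb 0)
  | succ n ih =>
    set E := ∑ k ∈ range (n + 1), e k with hE
    set A := a 0 ^ 2 + ∑ k ∈ range (n + 1), c k with hA
    have hE0 : 0 ≤ E := sum_nonneg fun k _ => he k
    have hA0 : 0 ≤ A := add_nonneg (sq_nonneg _) (sum_nonneg fun k _ => hc k)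
    have ha_le : a (n + 1) ≤ E + √A := by
      rw [hE, sum_range_succ]
      linarith [hstep n]
    calc b (n + 1) ≤ √(a (n + 1) ^ 2 + c (n + 1)) := Real.le_sqrt_of_sq_le (hb _)
      _ ≤ √((E + √A) ^ 2 + c (n + 1)) := by
        have := ha (n + 1)
        gcongr
      _ ≤ E + √(A + c (n + 1)) := sqrt_add_sqrt_sq_add_le hE0 hA0 (hc _)
      _ = E + √(a 0 ^ 2 + ∑ k ∈ range (n + 1 + 1), c k) := by
        rw [sum_range_succ c (n + 1), hA, add_assoc]

end RealSequences

lemma tendsto_comp_of_lowerSemicontinuousAt_of_le {ι X α : Type*} [TopologicalSpace X]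
    [LinearOrder α] [TopologicalSpace α] [OrderTopology α] {l : Filter ι} {φ : X → α} {p : X}
    {s : ι → X} {u : ι → α} (hφ : LowerSemicontinuousAt φ p) (hs : Tendsto s l (nhds p))
    (hu : Tendsto u l (nhds (φ p))) (hle : ∀ i, φ (s i) ≤ u i) :
    Tendsto (fun i => φ (s i)) l (nhds (φ p)) :=
  tendsto_order.2 ⟨fun a ha => hs.eventually (hφ a ha),
    fun _ hb => (hu.eventually_lt_const hb).mono fun i hi => (hle i).trans_lt hi⟩

lemma ne_top_of_forall_add_coe_le {X : Type*} {f : X → EReal} (hbot : ∀ u, f u ≠ ⊥)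
    (htop : ∃ u, f u ≠ ⊤) {φ : X → ℝ} {x : X} (hmin : ∀ w, f x + φ x ≤ f w + φ w) : f x ≠ ⊤ := by
  intro hx
  obtain ⟨w, hw⟩ := htop
  have hle := hmin w
  lift f w to ℝ using ⟨hw, hbot w⟩ with b
  rw [hx, EReal.top_add_coe, ← EReal.coe_add, top_le_iff] at hle
  exact EReal.coe_ne_top _ hle

lemma isBigO_inv_sqrt_of_mul_norm_sq_le {ι E : Type*} [SeminormedAddCommGroup E] {l : Filter ι}
    {a : ι → ℝ} {v : ι → E} {C : ℝ} (ha : ∀ i, 0 < a i) (hC : ∀ i, a i * ‖v i‖ ^ 2 ≤ C) :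
    v =O[l] fun i => (√(a i))⁻¹ := by
  refine .of_bound (√C) (Eventually.of_forall fun i => ?_)
  have hroot := Real.sqrt_le_sqrt (hC i)
  rw [Real.sqrt_mul (ha i).le, Real.sqrt_sq (norm_nonneg _)] at hroot
  rwa [norm_inv, Real.norm_of_nonneg (Real.sqrt_nonneg _), ← div_eq_mul_inv,
    le_div_iff₀' (Real.sqrt_pos.2 (ha i))]

section InnerProduct

variable {Y : Type*} [NormedAddCommGroup Y] [InnerProductSpace ℝ Y]

lemma inner_sub_nonneg_of_forall_norm_le {K : Set Y} (hK : Convex ℝ K) {p w : Y} (hp : p ∈ K)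
    (hmin : ∀ v ∈ K, ‖p‖ ≤ ‖v‖) (hw : w ∈ K) : 0 ≤ ⟪w - p, p⟫ := by
  have : Nonempty K := ⟨⟨p, hp⟩⟩
  have hdist : ‖(0 : Y) - p‖ = ⨅ v : K, ‖(0 : Y) - v‖ := by
    refine le_antisymm (le_ciInf fun v => by simpa using hmin v v.2) ?_
    exact ciInf_le ⟨0, by rintro _ ⟨v, rfl⟩; positivity⟩ (⟨p, hp⟩ : K)
  have hvar := (norm_eq_iInf_iff_real_inner_le_zero hK hp).1 hdist w hw
  rw [zero_sub, inner_neg_left, real_inner_comm] at hvar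
  linarith

lemma norm_sub_sq_le_of_inner_sub_nonneg {p w : Y} (h : 0 ≤ ⟪w - p, p⟫) :
    ‖w - p‖ ^ 2 ≤ ‖w‖ ^ 2 - ‖p‖ ^ 2 := by
  rw [inner_sub_left, real_inner_self_eq_norm_sq] at h
  rw [norm_sub_sq_real]
  linarith

lemma tendsto_of_tendsto_norm_of_inner_sub_nonneg {ι : Type*} {l : Filter ι} {s : ι → Y} {p : Y}
    (hnorm : Tendsto (fun i => ‖s i‖) l (nhds ‖p‖)) (hvar : ∀ i, 0 ≤ ⟪s i - p, p⟫) :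
    Tendsto s l (nhds p) := by
  have hgap : Tendsto (fun i => √(‖s i‖ ^ 2 - ‖p‖ ^ 2)) l (nhds 0) := by
    have := ((hnorm.pow 2).sub_const (‖p‖ ^ 2)).sqrt
    rwa [sub_self, Real.sqrt_zero] at this
  exact tendsto_iff_norm_sub_tendsto_zero.2 (squeeze_zero (fun _ => norm_nonneg _)
    (fun i => Real.le_sqrt_of_sq_le (norm_sub_sq_le_of_inner_sub_nonneg (hvar i))) hgap)

lemma norm_le_norm_add_of_inner_sub_nonneg {s s' d r : Y} {g e : ℝ} (hg : 0 < g)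
    (hmono : 0 ≤ ⟪s - s', d⟫) (hd : d = g • s' - r) (hr : ‖r‖ ≤ e) :
    ‖s'‖ ≤ ‖s‖ + 2 * (e / g) := by
  set q := g⁻¹ • r with hq
  have hq_le : ‖q‖ ≤ e / g := by
    rw [hq, norm_smul, norm_inv, Real.norm_of_nonneg hg.le, inv_mul_eq_div]
    gcongr
  have hd_eq : d = g • (s' - q) := by
    rw [hd, smul_sub, hq, smul_inv_smul₀ hg.ne']
  rw [hd_eq, real_inner_smul_right, mul_nonneg_iff_of_pos_left hg,
    ← sub_sub_sub_cancel_right s s' q] at hmono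
  have hcontract : ‖s' - q‖ ≤ ‖s - q‖ := by
    have := norm_sub_sq_le_of_inner_sub_nonneg hmono
    exact le_of_sq_le_sq (by linarith [sq_nonneg ‖s - q - (s' - q)‖]) (norm_nonneg _)
  linarith [norm_sub_norm_le s' q, norm_sub_le s q]

lemma tendsto_inner_zero_of_isBigO_inv_of_isLittleO {ι : Type*} {l : Filter ι} {u v : ι → Y}
    {g : ι → ℝ} (hu : u =O[l] fun i => (g i)⁻¹) (hv : v =o[l] g) :
    Tendsto (fun i => ⟪u i, v i⟫) l (nhds 0) := by
  have hone : (fun i => (g i)⁻¹ * g i) =O[l] fun _ => (1 : ℝ) :=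
    .of_bound' (Eventually.of_forall fun i => by
      by_cases hg : g i = 0 <;> simp [hg])
  have hprod := (hu.norm_left.mul_isLittleO hv.norm_left).trans_isBigO hone
  exact squeeze_zero_norm (fun i => norm_inner_le_norm _ _) ((isLittleO_one_iff ℝ).1 hprod)

end InnerProduct

section Conjugate

variable {Y : Type*} [NormedAddCommGroup Y] [InnerProductSpace ℝ Y] {h : Y → EReal}

lemma mem_subdiff_iff (hbot : ∀ u, h u ≠ ⊥) (htop : ∃ u, h u ≠ ⊤) {u v : Y} :
    v ∈ subdiff h u ↔
      h u ≠ ⊤ ∧ ∀ w, h w ≠ ⊤ → (h u).toReal + ⟪v, w - u⟫ ≤ (h w).toReal := by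
  have hreal : h u ≠ ⊤ → ∀ w, h w ≠ ⊤ →
      (h u + (⟪v, w - u⟫ : ℝ) ≤ h w ↔ (h u).toReal + ⟪v, w - u⟫ ≤ (h w).toReal) := by
    intro hu w hw
    lift h u to ℝ using ⟨hu, hbot u⟩ with a
    lift h w to ℝ using ⟨hw, hbot w⟩ with b
    exact_mod_cast Iff.rfl
  refine ⟨fun hv => ?_, fun ⟨hu, hv⟩ w => ?_⟩
  · have hu : h u ≠ ⊤ := by
      intro hu
      obtain ⟨w, hw⟩ := htop
      have := hv w
      rw [hu, EReal.top_add_coe, top_le_iff] at this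
      exact hw this
    exact ⟨hu, fun w hw => (hreal hu w hw).1 (hv w)⟩
  · by_cases hw : h w = ⊤
    · exact hw ▸ le_top
    · exact (hreal hu w hw).2 (hv w hw)

lemma fenchel_le_coe_iff (hbot : ∀ u, h u ≠ ⊥) {v : Y} {G : ℝ} :
    fenchel h v ≤ G ↔ ∀ w, h w ≠ ⊤ → ⟪v, w⟫ - (h w).toReal ≤ G := by
  rw [fenchel, iSup_le_iff]
  refine forall_congr' fun w => ?_
  by_cases hw : h w = ⊤
  · simp [hw]
  · rw [forall_prop_of_true hw]
    lift h w to ℝ using ⟨hw, hbot w⟩ with b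
    rw [← EReal.coe_sub, EReal.coe_le_coe_iff, EReal.toReal_coe]

lemma inner_sub_toReal_le_toReal_fenchel (hbot : ∀ u, h u ≠ ⊥) {v w : Y}
    (hv : fenchel h v ≠ ⊤) (hw : h w ≠ ⊤) : ⟪v, w⟫ - (h w).toReal ≤ (fenchel h v).toReal :=
  (fenchel_le_coe_iff hbot).1 (EReal.le_coe_toReal hv) w hw

lemma fenchel_ne_bot (htop : ∃ u, h u ≠ ⊤) (v : Y) : fenchel h v ≠ ⊥ := by
  obtain ⟨u, hu⟩ := htop
  refine ne_bot_of_le_ne_bot ?_ (le_iSup (fun w => ((⟪v, w⟫ : ℝ) : EReal) - h w) u)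
  cases hh : h u <;> simp_all [← EReal.coe_sub]

lemma lowerSemicontinuous_fenchel (h : Y → EReal) : LowerSemicontinuous (fenchel h) := by
  refine lowerSemicontinuous_iSup fun w => ?_
  cases h w with
  | bot => simpa using lowerSemicontinuous_const
  | top => simpa using lowerSemicontinuous_const
  | coe a =>
    simp only [← EReal.coe_sub]
    exact (continuous_coe_real_ereal.comp (by fun_prop)).lowerSemicontinuous

lemma convex_setOf_fenchel_ne_top (hbot : ∀ u, h u ≠ ⊥) : Convex ℝ {v | fenchel h v ≠ ⊤} := by
  intro v hv w hw a b ha hb hab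
  refine ne_top_of_le_ne_top (EReal.coe_ne_top _) ((fenchel_le_coe_iff hbot
    (G := a * (fenchel h v).toReal + b * (fenchel h w).toReal)).2 fun z hz => ?_)
  have hvz := mul_le_mul_of_nonneg_left (inner_sub_toReal_le_toReal_fenchel hbot hv hz) ha
  have hwz := mul_le_mul_of_nonneg_left (inner_sub_toReal_le_toReal_fenchel hbot hw hz) hb
  rw [inner_add_left, real_inner_smul_left, real_inner_smul_left]
  linear_combination hvz + hwz + (h z).toReal * hab

lemma fenchel_ne_top_of_mem_subdiff (hbot : ∀ u, h u ≠ ⊥) (htop : ∃ u, h u ≠ ⊤) {u v : Y}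
    (hv : v ∈ subdiff h u) : fenchel h v ≠ ⊤ := by
  refine ne_top_of_le_ne_top (EReal.coe_ne_top _) ((fenchel_le_coe_iff hbot
    (G := ⟪v, u⟫ - (h u).toReal)).2 fun w hw => ?_)
  have := ((mem_subdiff_iff hbot htop).1 hv).2 w hw
  rw [inner_sub_right] at this
  linarith

lemma inner_sub_nonneg_of_mem_subdiff (hbot : ∀ u, h u ≠ ⊥) (htop : ∃ u, h u ≠ ⊤) {x x' s s' : Y}
    (hs : s ∈ subdiff h x) (hs' : s' ∈ subdiff h x') : 0 ≤ ⟪s - s', x - x'⟫ := by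
  obtain ⟨hx, hsub⟩ := (mem_subdiff_iff hbot htop).1 hs
  obtain ⟨hx', hsub'⟩ := (mem_subdiff_iff hbot htop).1 hs'
  have hle := hsub x' hx'
  rw [← neg_sub x x', inner_neg_right] at hle
  rw [inner_sub_left]
  linarith [hsub' x hx]

lemma fenchel_le_toReal_fenchel_add_inner (hbot : ∀ u, h u ≠ ⊥) (htop : ∃ u, h u ≠ ⊤)
    {p x s : Y} (hp : fenchel h p ≠ ⊤) (hs : s ∈ subdiff h x) :
    fenchel h s ≤ ((fenchel h p).toReal + ⟪s - p, x⟫ : ℝ) := by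
  obtain ⟨hx, hsub⟩ := (mem_subdiff_iff hbot htop).1 hs
  refine (fenchel_le_coe_iff hbot).2 fun w hw => ?_
  have hsw := hsub w hw
  rw [inner_sub_right] at hsw
  rw [inner_sub_left]
  linarith [inner_sub_toReal_le_toReal_fenchel hbot hp hx]

-- The witness is a `δ`-minimizer of `h - ⟪p, ·⟫`.
lemma exists_forall_mem_subdiff_neg_le_inner (hbot : ∀ u, h u ≠ ⊥) (htop : ∃ u, h u ≠ ⊤)
    {p : Y} (hp : fenchel h p ≠ ⊤) {δ : ℝ} (hδ : 0 < δ) :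
    ∃ z, ∀ x, ∀ s ∈ subdiff h x, -δ ≤ ⟪s - p, x - z⟫ := by
  obtain ⟨z, hz, hzδ⟩ :
      ∃ z, h z ≠ ⊤ ∧ (fenchel h p).toReal - δ < ⟪p, z⟫ - (h z).toReal := by
    by_contra! hle
    have hfenchel := (fenchel_le_coe_iff hbot).2 hle
    rw [← EReal.coe_toReal hp (fenchel_ne_bot htop p), EReal.coe_le_coe_iff,
      EReal.toReal_coe] at hfenchel
    linarith
  refine ⟨z, fun x s hs => ?_⟩
  obtain ⟨hx, hsub⟩ := (mem_subdiff_iff hbot htop).1 hs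
  have hsz := hsub z hz
  have hpx := inner_sub_toReal_le_toReal_fenchel hbot hp hx
  rw [← neg_sub x z, inner_neg_right] at hsz
  rw [inner_sub_left, inner_sub_right p]
  linarith

lemma mem_subdiff_of_forall_prox_le (hbot : ∀ u, h u ≠ ⊥) (htop : ∃ u, h u ≠ ⊤)
    (hcvx : ∀ u v : Y, ∀ a b : ℝ, 0 ≤ a → 0 ≤ b → a + b = 1 →
      h (a • u + b • v) ≤ (a : EReal) * h u + (b : EReal) * h v)
    {g : ℝ} {l x : Y}
    (hmin : ∀ w, h x + ((‖l - x‖ ^ 2 / (2 * g) : ℝ) : EReal)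
      ≤ h w + ((‖l - w‖ ^ 2 / (2 * g) : ℝ) : EReal)) :
    g⁻¹ • (l - x) ∈ subdiff h x := by
  have hx : h x ≠ ⊤ :=
    ne_top_of_forall_add_coe_le (φ := fun w => ‖l - w‖ ^ 2 / (2 * g)) hbot htop hmin
  refine (mem_subdiff_iff hbot htop).2 ⟨hx, fun w hw => ?_⟩
  have hsegment : ∀ t ∈ Set.Ioc (0 : ℝ) 1, (h x).toReal + ⟪g⁻¹ • (l - x), w - x⟫ ≤
      (h w).toReal + t * (‖w - x‖ ^ 2 / (2 * g)) := by
    rintro t ⟨ht0, ht1⟩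
    have hconv := hcvx x w (1 - t) t (by linarith) ht0.le (by ring)
    have hle := (hmin ((1 - t) • x + t • w)).trans (add_le_add_left hconv _)
    lift h x to ℝ using ⟨hx, hbot x⟩ with a
    lift h w to ℝ using ⟨hw, hbot w⟩ with b
    norm_cast at hle
    rw [show l - ((1 - t) • x + t • w) = (l - x) - t • (w - x) by module, norm_sub_sq_real (l - x),
      norm_smul, real_inner_smul_right, Real.norm_of_nonneg ht0.le] at hle
    rw [real_inner_smul_left, EReal.toReal_coe, EReal.toReal_coe]
    refine le_of_mul_le_mul_left ?_ ht0
    linear_combination hle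
  have hlim : Tendsto (fun t : ℝ => (h w).toReal + t * (‖w - x‖ ^ 2 / (2 * g)))
      (nhdsWithin 0 (Set.Ioi 0)) (nhds (h w).toReal) :=
    (Continuous.tendsto' (by fun_prop) 0 _ (by simp)).mono_left nhdsWithin_le_nhds
  exact ge_of_tendsto hlim (eventually_of_mem (Ioc_mem_nhdsGT one_pos) hsegment)

end Conjugate

section ProximalPoint

open Finset

variable {Y : Type*} [NormedAddCommGroup Y] [InnerProductSpace ℝ Y]

/-- The inexact proximal point iteration for `h`, expressed through subgradients: `x k` is an exact
proximal point of `L k` with step size `γ k`, `s k` is the associated subgradient, and the next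
iterate `L (k + 1)` approximates `x k` up to `e k`. In the notation of the paper, `L k = λᵏ`,
`x k = λ⋆ᵏ⁺¹`, `s k = s⋆ᵏ⁺¹` and `e k = εₖ₊₁`. -/
structure InexactProxSeq (h : Y → EReal) (γ e : ℕ → ℝ) (L x s : ℕ → Y) : Prop where
  step_pos : ∀ k, 0 < γ k
  mem_subdiff : ∀ k, s k ∈ subdiff h (x k)
  eq_add_smul : ∀ k, L k = x k + γ k • s k
  norm_succ_sub_le : ∀ k, ‖L (k + 1) - x k‖ ≤ e k

namespace InexactProxSeq

variable {h : Y → EReal} {γ e : ℕ → ℝ} {L x s : ℕ → Y} {p v : Y}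

lemma error_nonneg (hseq : InexactProxSeq h γ e L x s) (k : ℕ) : 0 ≤ e k :=
  (norm_nonneg _).trans (hseq.norm_succ_sub_le k)

lemma sum_step_nonneg (hseq : InexactProxSeq h γ e L x s) (n : ℕ) : 0 ≤ ∑ i ∈ range n, γ i :=
  sum_nonneg fun i _ => (hseq.step_pos i).le

lemma sub_succ_eq (hseq : InexactProxSeq h γ e L x s) (k : ℕ) :
    x k - x (k + 1) = γ (k + 1) • s (k + 1) - (L (k + 1) - x k) := by
  rw [hseq.eq_add_smul (k + 1)]
  abel

lemma norm_succ_le (hbot : ∀ u, h u ≠ ⊥) (htop : ∃ u, h u ≠ ⊤)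
    (hseq : InexactProxSeq h γ e L x s) (k : ℕ) :
    ‖s (k + 1)‖ ≤ ‖s k‖ + 2 * (e k / γ (k + 1)) :=
  norm_le_norm_add_of_inner_sub_nonneg (hseq.step_pos _)
    (inner_sub_nonneg_of_mem_subdiff hbot htop (hseq.mem_subdiff k) (hseq.mem_subdiff (k + 1)))
    (hseq.sub_succ_eq k) (hseq.norm_succ_sub_le k)

lemma summable_error_div_step (hseq : InexactProxSeq h γ e L x s)
    (hsum : Summable fun k => e k / γ (k + 1) * ∑ i ∈ range (k + 1), γ i) :
    Summable fun k => e k / γ (k + 1) := by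
  have hnonneg : ∀ k, 0 ≤ e k / γ (k + 1) :=
    fun k => div_nonneg (hseq.error_nonneg k) (hseq.step_pos _).le
  refine .of_nonneg_of_le hnonneg (fun k => ?_) (hsum.mul_right (γ 0)⁻¹)
  have hle : γ 0 ≤ ∑ i ∈ range (k + 1), γ i :=
    single_le_sum (fun i _ => (hseq.step_pos i).le) (by simp)
  rw [← div_eq_mul_inv, le_div_iff₀ (hseq.step_pos 0)]
  exact mul_le_mul_of_nonneg_left hle (hnonneg k)

lemma exists_tendsto_norm (hbot : ∀ u, h u ≠ ⊥) (htop : ∃ u, h u ≠ ⊤)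
    (hseq : InexactProxSeq h γ e L x s)
    (hsum : Summable fun k => e k / γ (k + 1) * ∑ i ∈ range (k + 1), γ i) :
    ∃ l, Tendsto (fun k => ‖s k‖) atTop (nhds l) :=
  exists_tendsto_of_le_add_of_summable ⟨0, by rintro _ ⟨k, rfl⟩; positivity⟩
    ((hseq.summable_error_div_step hsum).mul_left 2) (hseq.norm_succ_le hbot htop)

lemma step_mul_norm_sq_sub_norm_sq_le (hbot : ∀ u, h u ≠ ⊥) (htop : ∃ u, h u ≠ ⊤)
    (hseq : InexactProxSeq h γ e L x s) (v : Y) (k : ℕ) :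
    γ (k + 1) * (‖s (k + 1)‖ ^ 2 - ‖v‖ ^ 2) ≤
      2 * (((h (x k)).toReal - ⟪v, x k⟫) - ((h (x (k + 1))).toReal - ⟪v, x (k + 1)⟫)
        + ‖s (k + 1) - v‖ * e k) := by
  have hsub := ((mem_subdiff_iff hbot htop).1 (hseq.mem_subdiff (k + 1))).2 (x k)
    ((mem_subdiff_iff hbot htop).1 (hseq.mem_subdiff k)).1
  have herror : ⟪s (k + 1) - v, L (k + 1) - x k⟫ ≤ ‖s (k + 1) - v‖ * e k :=
    (real_inner_le_norm _ _).trans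
      (mul_le_mul_of_nonneg_left (hseq.norm_succ_sub_le k) (norm_nonneg _))
  have hsplit : γ (k + 1) * ⟪s (k + 1) - v, s (k + 1)⟫ =
      ⟪s (k + 1), x k - x (k + 1)⟫ - ⟪v, x k - x (k + 1)⟫
        + ⟪s (k + 1) - v, L (k + 1) - x k⟫ := by
    rw [← inner_sub_left, ← inner_add_right, hseq.sub_succ_eq, sub_add_cancel,
      real_inner_smul_right]
  have hpolar : ‖s (k + 1)‖ ^ 2 - ‖v‖ ^ 2 ≤ 2 * ⟪s (k + 1) - v, s (k + 1)⟫ := by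
    have := norm_sub_sq_real (s (k + 1)) v
    rw [inner_sub_left, real_inner_self_eq_norm_sq, real_inner_comm]
    linarith [sq_nonneg ‖s (k + 1) - v‖]
  have hscaled := mul_le_mul_of_nonneg_left hpolar (hseq.step_pos (k + 1)).le
  rw [inner_sub_right v] at hsplit
  linarith

lemma exists_sum_step_mul_norm_sq_sub_le (hbot : ∀ u, h u ≠ ⊥) (htop : ∃ u, h u ≠ ⊤)
    (hseq : InexactProxSeq h γ e L x s) (he : Summable e) (hs : BddAbove (Set.range fun k => ‖s k‖))
    (hv : fenchel h v ≠ ⊤) :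
    ∃ C, ∀ n, ∑ k ∈ range (n + 1), γ k * (‖s k‖ ^ 2 - ‖v‖ ^ 2) ≤ C := by
  obtain ⟨M, hM⟩ := hs
  set ψ : ℕ → ℝ := fun k => (h (x k)).toReal - ⟪v, x k⟫ with hψ
  have hM0 : 0 ≤ M + ‖v‖ :=
    add_nonneg ((norm_nonneg _).trans (hM ⟨0, rfl⟩)) (norm_nonneg v)
  have hstep : ∀ k, γ (k + 1) * (‖s (k + 1)‖ ^ 2 - ‖v‖ ^ 2) ≤
      2 * (ψ k - ψ (k + 1) + (M + ‖v‖) * e k) := fun k => by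
    have hnorm : ‖s (k + 1) - v‖ ≤ M + ‖v‖ :=
      (norm_sub_le (s (k + 1)) v).trans (add_le_add_left (hM ⟨k + 1, rfl⟩) _)
    have := hseq.step_mul_norm_sq_sub_norm_sq_le hbot htop v k
    linarith [mul_le_mul_of_nonneg_right hnorm (hseq.error_nonneg k)]
  have hψ_bound : ∀ n, -ψ n ≤ (fenchel h v).toReal := fun n => by
    rw [hψ, neg_sub]
    exact inner_sub_toReal_le_toReal_fenchel hbot hv
      ((mem_subdiff_iff hbot htop).1 (hseq.mem_subdiff n)).1
  refine ⟨2 * (ψ 0 + (fenchel h v).toReal + (M + ‖v‖) * ∑' k, e k)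
    + γ 0 * (‖s 0‖ ^ 2 - ‖v‖ ^ 2), fun n => ?_⟩
  have he_sum := mul_le_mul_of_nonneg_left
    (he.sum_le_tsum (range n) fun k _ => hseq.error_nonneg k) hM0
  rw [sum_range_succ']
  refine add_le_add_left ((sum_le_sum fun k _ => hstep k).trans ?_) _
  rw [← mul_sum, sum_add_distrib, sum_range_sub' ψ, ← mul_sum]
  linarith [hψ_bound n]

lemma le_norm_of_tendsto_norm (hbot : ∀ u, h u ≠ ⊥) (htop : ∃ u, h u ≠ ⊤)
    (hseq : InexactProxSeq h γ e L x s) (he : Summable e)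
    (hdiv : Tendsto (fun n => ∑ i ∈ range n, γ i) atTop atTop) {l : ℝ}
    (hl : Tendsto (fun k => ‖s k‖) atTop (nhds l)) (hv : fenchel h v ≠ ⊤) : l ≤ ‖v‖ := by
  obtain ⟨C, hC⟩ := hseq.exists_sum_step_mul_norm_sq_sub_le hbot htop he hl.bddAbove_range hv
  have hfreq : ∃ᶠ n in atTop, ∑ k ∈ range n, γ k * (‖s k‖ ^ 2 - ‖v‖ ^ 2) ≤ C :=
    (tendsto_add_atTop_nat 1).frequently (Eventually.of_forall hC).frequently
  have hsq := nonpos_of_tendsto_of_frequently_sum_mul_le (fun k => (hseq.step_pos k).le) hdiv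
    ((hl.pow 2).sub_const (‖v‖ ^ 2)) hfreq
  exact le_of_sq_le_sq (sub_nonpos.1 hsq) (norm_nonneg v)

lemma tendsto_norm (hbot : ∀ u, h u ≠ ⊥) (htop : ∃ u, h u ≠ ⊤)
    (hseq : InexactProxSeq h γ e L x s) (he : Summable e)
    (hsum : Summable fun k => e k / γ (k + 1) * ∑ i ∈ range (k + 1), γ i)
    (hdiv : Tendsto (fun n => ∑ i ∈ range n, γ i) atTop atTop)
    (hp : p ∈ closure {v | fenchel h v ≠ ⊤}) (hle : ∀ k, ‖p‖ ≤ ‖s k‖) :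
    Tendsto (fun k => ‖s k‖) atTop (nhds ‖p‖) := by
  obtain ⟨l, hl⟩ := hseq.exists_tendsto_norm hbot htop hsum
  have hl_le : l ≤ ‖p‖ := closure_minimal
    (fun v hv => hseq.le_norm_of_tendsto_norm hbot htop he hdiv hl hv)
    (isClosed_le continuous_const continuous_norm) hp
  rwa [← hl_le.antisymm (ge_of_tendsto' hl hle)]

lemma inner_sub_nonneg_of_mem_closure (hbot : ∀ u, h u ≠ ⊥) (htop : ∃ u, h u ≠ ⊤)
    (hseq : InexactProxSeq h γ e L x s) (he : Summable e)
    (hdiv : Tendsto (fun n => ∑ i ∈ range n, γ i) atTop atTop)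
    (hnorm : Tendsto (fun k => ‖s k‖) atTop (nhds ‖p‖))
    (hp : p ∈ closure {v | fenchel h v ≠ ⊤}) (k : ℕ) : 0 ≤ ⟪s k - p, p⟫ := by
  have hmin : ∀ v ∈ closure {v | fenchel h v ≠ ⊤}, ‖p‖ ≤ ‖v‖ := closure_minimal
    (fun v hv => hseq.le_norm_of_tendsto_norm hbot htop he hdiv hnorm hv)
    (isClosed_le continuous_const continuous_norm)
  exact inner_sub_nonneg_of_forall_norm_le (convex_setOf_fenchel_ne_top hbot).closure hp hmin
    (subset_closure (fenchel_ne_top_of_mem_subdiff hbot htop (hseq.mem_subdiff k)))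

lemma exists_sum_step_mul_norm_sub_sq_le (hbot : ∀ u, h u ≠ ⊥) (htop : ∃ u, h u ≠ ⊤)
    (hseq : InexactProxSeq h γ e L x s) (he : Summable e)
    (hsum : Summable fun k => e k / γ (k + 1) * ∑ i ∈ range (k + 1), γ i)
    (hs : BddAbove (Set.range fun k => ‖s k‖)) (hp : fenchel h p ≠ ⊤)
    (hvar : ∀ k, 0 ≤ ⟪s k - p, p⟫) :
    ∃ C, ∀ n, (∑ i ∈ range (n + 1), γ i) * ‖s n - p‖ ^ 2 ≤ C := by
  obtain ⟨C, hC⟩ := hseq.exists_sum_step_mul_norm_sq_sub_le hbot htop he hs hp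
  obtain ⟨M, hM⟩ := hs
  have hM0 : 0 ≤ M := (norm_nonneg _).trans (hM ⟨0, rfl⟩)
  have hratio : ∀ k, 0 ≤ e k / γ (k + 1) :=
    fun k => div_nonneg (hseq.error_nonneg k) (hseq.step_pos _).le
  have hstep : ∀ k, ‖s (k + 1)‖ ^ 2 - ‖p‖ ^ 2 ≤
      ‖s k‖ ^ 2 - ‖p‖ ^ 2 + 4 * M * (e k / γ (k + 1)) := by
    intro k
    have hfactor : (‖s (k + 1)‖ - ‖s k‖) * (‖s (k + 1)‖ + ‖s k‖) ≤
        2 * (e k / γ (k + 1)) * (M + M) :=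
      mul_le_mul (by linarith [hseq.norm_succ_le hbot htop k])
        (add_le_add (hM ⟨k + 1, rfl⟩) (hM ⟨k, rfl⟩)) (by positivity)
        (mul_nonneg zero_le_two (hratio k))
    linear_combination hfactor
  refine ⟨C + 4 * M * ∑' k, e k / γ (k + 1) * ∑ i ∈ range (k + 1), γ i, fun n => ?_⟩
  have hmain := sum_mul_le_of_le_add (u := fun k => ‖s k‖ ^ 2 - ‖p‖ ^ 2)
    (fun k => (hseq.step_pos k).le) hstep n
  simp only [mul_assoc (4 * M), ← mul_sum] at hmain
  have htail := mul_le_mul_of_nonneg_left (hsum.sum_le_tsum (range n) fun k _ =>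
    mul_nonneg (hratio k) (hseq.sum_step_nonneg _)) (mul_nonneg zero_le_four hM0)
  have hsq := mul_le_mul_of_nonneg_left (norm_sub_sq_le_of_inner_sub_nonneg (hvar n))
    (hseq.sum_step_nonneg (n + 1))
  linarith [hC n]

lemma norm_add_smul_sub_le (hseq : InexactProxSeq h γ e L x s) (hvar : ∀ k, 0 ≤ ⟪s k - p, p⟫)
    {δ : ℝ} (hδ : 0 ≤ δ) {z : Y} (hz : ∀ k, -δ ≤ ⟪s k - p, x k - z⟫) (n : ℕ) :
    ‖x n + (∑ i ∈ range (n + 1), γ i) • p - z‖ ≤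
      ∑ k ∈ range n, e k + √(‖L 0 - z‖ ^ 2 + 2 * δ * ∑ i ∈ range (n + 1), γ i) := by
  have hprox : ∀ n, ‖x n + (∑ i ∈ range (n + 1), γ i) • p - z‖ ^ 2 ≤
      ‖L n + (∑ i ∈ range n, γ i) • p - z‖ ^ 2 + 2 * δ * γ n := by
    intro n
    set ν := x n + (∑ i ∈ range (n + 1), γ i) • p - z with hν
    have hL : L n + (∑ i ∈ range n, γ i) • p - z = ν + γ n • (s n - p) := by
      rw [hν, hseq.eq_add_smul n, sum_range_succ]
      module
    have hinner : -δ ≤ ⟪s n - p, ν⟫ := by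
      rw [hν, add_sub_right_comm, inner_add_right, real_inner_smul_right]
      linarith [hz n, mul_nonneg (hseq.sum_step_nonneg (n + 1)) (hvar n)]
    rw [hL, norm_add_sq_real, real_inner_smul_right, real_inner_comm]
    linarith [sq_nonneg ‖γ n • (s n - p)‖, mul_le_mul_of_nonneg_left hinner (hseq.step_pos n).le]
  have herror : ∀ n, ‖L (n + 1) + (∑ i ∈ range (n + 1), γ i) • p - z‖ ≤
      ‖x n + (∑ i ∈ range (n + 1), γ i) • p - z‖ + e n := by
    intro n
    rw [show L (n + 1) + (∑ i ∈ range (n + 1), γ i) • p - z =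
      (x n + (∑ i ∈ range (n + 1), γ i) • p - z) + (L (n + 1) - x n) by abel]
    exact (norm_add_le _ _).trans (add_le_add_right (hseq.norm_succ_sub_le n) _)
  have hbound := le_sum_add_sqrt_of_sq_le_sq_add (fun n => norm_nonneg _)
    (fun n => mul_nonneg (mul_nonneg zero_le_two hδ) (hseq.step_pos n).le) hseq.error_nonneg
    hprox herror n
  simpa [← mul_sum] using hbound

lemma isLittleO_add_smul (hseq : InexactProxSeq h γ e L x s) (he : Summable e)
    (hdiv : Tendsto (fun n => ∑ i ∈ range n, γ i) atTop atTop) (hvar : ∀ k, 0 ≤ ⟪s k - p, p⟫)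
    (hz : ∀ δ > 0, ∃ z, ∀ k, -δ ≤ ⟪s k - p, x k - z⟫) :
    (fun n => x n + (∑ i ∈ range (n + 1), γ i) • p) =o[atTop]
      fun n => √(∑ i ∈ range (n + 1), γ i) := by
  refine isLittleO_iff.2 fun r hr => ?_
  obtain ⟨z, hz⟩ := hz ((r / 2) ^ 2 / 2) (by positivity)
  have hroot : Tendsto (fun n => √(∑ i ∈ range (n + 1), γ i)) atTop atTop :=
    Real.tendsto_sqrt_atTop.comp ((tendsto_add_atTop_iff_nat 1).2 hdiv)
  filter_upwards [hroot.eventually_ge_atTop ((‖z‖ + ∑' k, e k + ‖L 0 - z‖) / (r / 2))] with n hn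
  set Γ := ∑ i ∈ range (n + 1), γ i
  rw [div_le_iff₀ (half_pos hr)] at hn
  have hsqrt : √(‖L 0 - z‖ ^ 2 + 2 * ((r / 2) ^ 2 / 2) * Γ) ≤ ‖L 0 - z‖ + r / 2 * √Γ := by
    have hcross : 0 ≤ ‖L 0 - z‖ * (r / 2 * √Γ) := by positivity
    refine Real.sqrt_le_iff.2 ⟨by positivity, ?_⟩
    linear_combination 2 * hcross - (r / 2) ^ 2 * Real.sq_sqrt (hseq.sum_step_nonneg (n + 1))
  calc ‖x n + Γ • p‖ ≤ ‖x n + Γ • p - z‖ + ‖z‖ := by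
        simpa using norm_add_le (x n + Γ • p - z) z
    _ ≤ ∑' k, e k + (‖L 0 - z‖ + r / 2 * √Γ) + ‖z‖ := by
        have hdrift := hseq.norm_add_smul_sub_le hvar (by positivity) hz n
        have he_sum := he.sum_le_tsum (range n) fun k _ => hseq.error_nonneg k
        linarith
    _ ≤ r * ‖√Γ‖ := by
        rw [Real.norm_of_nonneg (Real.sqrt_nonneg Γ)]
        linarith

theorem tendsto_fenchel (hbot : ∀ u, h u ≠ ⊥) (htop : ∃ u, h u ≠ ⊤)
    (hseq : InexactProxSeq h γ e L x s) (he : Summable e)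
    (hsum : Summable fun k => e k / γ (k + 1) * ∑ i ∈ range (k + 1), γ i)
    (hdiv : Tendsto (fun n => ∑ i ∈ range n, γ i) atTop atTop)
    (hp : p ∈ closure {v | fenchel h v ≠ ⊤}) (hle : ∀ k, ‖p‖ ≤ ‖s k‖) :
    Tendsto (fun k => fenchel h (s k)) atTop (nhds (fenchel h p)) := by
  have hnorm := hseq.tendsto_norm hbot htop he hsum hdiv hp hle
  have hvar := hseq.inner_sub_nonneg_of_mem_closure hbot htop he hdiv hnorm hp
  have hs := tendsto_of_tendsto_norm_of_inner_sub_nonneg hnorm hvar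
  have hlsc := lowerSemicontinuous_fenchel h p
  by_cases hfin : fenchel h p = ⊤
  · exact tendsto_comp_of_lowerSemicontinuousAt_of_le hlsc hs (hfin ▸ tendsto_const_nhds)
      fun _ => le_top
  obtain ⟨C, hC⟩ :=
    hseq.exists_sum_step_mul_norm_sub_sq_le hbot htop he hsum hnorm.bddAbove_range hfin hvar
  have hx := hseq.isLittleO_add_smul he hdiv hvar fun δ hδ =>
    (exists_forall_mem_subdiff_neg_le_inner hbot htop hfin hδ).imp fun z hz k =>
      hz _ _ (hseq.mem_subdiff k)
  have hrate := isBigO_inv_sqrt_of_mul_norm_sq_le (l := atTop)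
    (fun n => sum_pos (fun i _ => hseq.step_pos i) (nonempty_range_add_one (n := n))) hC
  have hinner := tendsto_inner_zero_of_isBigO_inv_of_isLittleO hrate hx
  have hupper := (continuous_coe_real_ereal.tendsto _).comp
    (hinner.const_add (fenchel h p).toReal)
  rw [add_zero, EReal.coe_toReal hfin (fenchel_ne_bot htop p)] at hupper
  refine tendsto_comp_of_lowerSemicontinuousAt_of_le hlsc hs hupper fun n => ?_
  refine (fenchel_le_toReal_fenchel_add_inner hbot htop hfin (hseq.mem_subdiff n)).trans ?_
  refine EReal.coe_le_coe_iff.2 (add_le_add_right ?_ _)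
  rw [inner_add_right, real_inner_smul_right]
  exact le_add_of_nonneg_right (mul_nonneg (hseq.sum_step_nonneg _) (hvar n))

end InexactProxSeq

end ProximalPoint

theorem statement9_general
    {Y : Type*} [NormedAddCommGroup Y] [InnerProductSpace ℝ Y]
    (h : Y → EReal)
    (hh_bot : ∀ u : Y, h u ≠ ⊥) (hh_top : ∃ u : Y, h u ≠ ⊤)
    (hh_cvx : ∀ u v : Y, ∀ a b : ℝ, 0 ≤ a → 0 ≤ b → a + b = 1 →
      h (a • u + b • v) ≤ (a : EReal) * h u + (b : EReal) * h v)
    (γ : ℕ → ℝ) (hγ : ∀ k : ℕ, 0 < γ k) (ε : ℕ → ℝ)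
    (lam lamstar sstar : ℕ → Y)
    (hmin : ∀ (k : ℕ) (μ : Y),
      h (lamstar (k+1)) + ((‖lam k - lamstar (k+1)‖ ^ 2 / (2 * γ k) : ℝ) : EReal)
        ≤ h μ + ((‖lam k - μ‖ ^ 2 / (2 * γ k) : ℝ) : EReal))
    (hsstar : ∀ k : ℕ, sstar (k+1) = (γ k)⁻¹ • (lam k - lamstar (k+1)))
    (herr : ∀ k : ℕ, ‖lam (k+1) - lamstar (k+1)‖ ≤ ε (k+1))
    (A1 : Summable ε)
    (A4 : Summable fun k : ℕ => ε (k+1) / γ (k+1) * ∑ i ∈ Finset.range (k+1), γ i)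
    (A5 : Tendsto (fun n : ℕ => ∑ i ∈ Finset.range n, γ i) atTop atTop)
    (sbar : Y)
    (hsbar_mem : sbar ∈ closure {v : Y | ∃ u : Y, v ∈ subdiff h u})
    (hsbar_min : ∀ v ∈ closure {v : Y | ∃ u : Y, v ∈ subdiff h u}, ‖sbar‖ ≤ ‖v‖) :
    Tendsto (fun k : ℕ => fenchel h (sstar k)) atTop (nhds (fenchel h sbar)) := by
  have hsub : ∀ k, sstar (k + 1) ∈ subdiff h (lamstar (k + 1)) := fun k =>
    hsstar k ▸ mem_subdiff_of_forall_prox_le hh_bot hh_top hh_cvx (hmin k)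
  have hseq : InexactProxSeq h γ (fun k => ε (k + 1)) lam (fun k => lamstar (k + 1))
      (fun k => sstar (k + 1)) :=
    { step_pos := hγ
      mem_subdiff := hsub
      eq_add_smul := fun k => by rw [hsstar, smul_inv_smul₀ (hγ k).ne', add_sub_cancel]
      norm_succ_sub_le := herr }
  have hrange : {v | ∃ u, v ∈ subdiff h u} ⊆ {v | fenchel h v ≠ ⊤} :=
    fun _ ⟨_, hv⟩ => fenchel_ne_top_of_mem_subdiff hh_bot hh_top hv
  have hle : ∀ k, ‖sbar‖ ≤ ‖sstar (k + 1)‖ := fun k =>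
    hsbar_min _ (subset_closure ⟨lamstar (k + 1), hsub k⟩)
  refine (tendsto_add_atTop_iff_nat 1).1 ?_
  exact hseq.tendsto_fenchel hh_bot hh_top ((summable_nat_add_iff 1).2 A1) A4 A5
    (closure_mono hrange hsbar_mem) hle

theorem statement9
    {Y : Type*}
    [NormedAddCommGroup Y] [InnerProductSpace ℝ Y] [CompleteSpace Y]
    (h : Y → EReal)
    (hh_bot : ∀ u : Y, h u ≠ ⊥) (hh_top : ∃ u : Y, h u ≠ ⊤)
    (hh_lsc : LowerSemicontinuous h)
    (hh_cvx : ∀ u v : Y, ∀ a b : ℝ, 0 ≤ a → 0 ≤ b → a + b = 1 →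
      h (a • u + b • v) ≤ (a : EReal) * h u + (b : EReal) * h v)
    (γ : ℕ → ℝ) (hγ : ∀ k : ℕ, 0 < γ k) (ε : ℕ → ℝ) (hε : ∀ k : ℕ, 0 ≤ ε k)
    (lam lamstar sstar ss : ℕ → Y)
    (hmin : ∀ (k : ℕ) (μ : Y),
      h (lamstar (k+1)) + ((‖lam k - lamstar (k+1)‖ ^ 2 / (2 * γ k) : ℝ) : EReal)
        ≤ h μ + ((‖lam k - μ‖ ^ 2 / (2 * γ k) : ℝ) : EReal))
    (hsstar : ∀ k : ℕ, sstar (k+1) = (γ k)⁻¹ • (lam k - lamstar (k+1)))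
    (herr : ∀ k : ℕ, ‖lam (k+1) - lamstar (k+1)‖ ≤ ε (k+1))
    (hss : ∀ k : ℕ, ss (k+1) = (γ k)⁻¹ • (lam k - lam (k+1)))
    (A1 : Summable ε)
    (A2 : (fun k : ℕ => ε (k+1) / γ k * ∑ i ∈ Finset.range (k+1), γ i)
        =O[atTop] fun k : ℕ => 1 / Real.sqrt (∑ i ∈ Finset.range (k+1), γ i))
    (A3 : Summable fun k : ℕ => (ε (k+1) / γ (k+1)) ^ 2 * ∑ i ∈ Finset.range (k+1), γ i)
    (A4 : Summable fun k : ℕ => ε (k+1) / γ (k+1) * ∑ i ∈ Finset.range (k+1), γ i)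
    (A5 : Tendsto (fun n : ℕ => ∑ i ∈ Finset.range n, γ i) atTop atTop)
    (sbar : Y)
    (hsbar_mem : sbar ∈ closure {v : Y | ∃ u : Y, v ∈ subdiff h u})
    (hsbar_min : ∀ v ∈ closure {v : Y | ∃ u : Y, v ∈ subdiff h u}, ‖sbar‖ ≤ ‖v‖)
    :
    Tendsto (fun k : ℕ => fenchel h (sstar k)) atTop (nhds (fenchel h sbar)) :=
  statement9_general h hh_bot hh_top hh_cvx γ hγ ε lam lamstar sstar hmin hsstar herr A1 A4 A5
    sbar hsbar_mem hsbar_min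
end
end

section
/- Suppose X and Y are finite-dimensional. Then the objective function f has no nonzero recession direction in common with the constraints (i.e. no nonzero d in the recession cone D of the constraints is a recession direction of f) if and only if f is level bounded with respect to constraint perturbations (i.e. for every s ∈ Y there is a neighborhood V_s of s such that f restricted to { x ∈ X : C(x) ∈ K + V_s } has bounded sublevel sets). -/
open scoped RealInnerProductSpace
open Filter Asymptotics

noncomputable section

/-- The value function of the shifted problem: `ν(s̃) = inf { f x | (x, s̃) ∈ 𝒞 }`. -/
def valueFn {E Y : Type*} (f : E → EReal) (CC : Set (E × Y)) (st : Y) : EReal :=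
  ⨅ (x : E) (_ : (x, st) ∈ CC), f x

/-!
Recession directions are handled through asymptotic cones. If `B` is bounded and `d` is an
asymptotic direction of the projection of `A ∩ (E × B)` to `E`, then `(d, 0)` is an asymptotic
direction of `A`, because the bounded component vanishes after rescaling. Applied to the constraint
set and to the epigraph of `f`, this makes every asymptotic direction of a perturbed sublevel set a
recession direction of both. Conversely, a common recession direction, followed from a feasible
point of `dom f`, stays in one sublevel set. In finite dimension, a set is bounded exactly when it
has no nonzero asymptotic direction.
-/

section AsymptoticCone

theorem mem_asymptoticCone_of_forall_smul_vadd_mem {k V P : Type*}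
    [Field k] [LinearOrder k] [IsStrictOrderedRing k] [TopologicalSpace k] [OrderTopology k]
    [AddCommGroup V] [Module k V] [TopologicalSpace V] [IsTopologicalAddGroup V]
    [ContinuousSMul k V] [AddTorsor V P] {s : Set P} {v : V} {p : P}
    (hray : ∀ t : k, 0 ≤ t → t • v +ᵥ p ∈ s) : v ∈ asymptoticCone k s :=
  ((tendsto_id.atTop_smul_const_tendsto_asymptoticNhds v).asymptoticNhds_vadd_const p).frequently
    ((eventually_ge_atTop 0).mono hray).frequently

variable {E F : Type*} [AddCommGroup E] [Module ℝ E] [TopologicalSpace E]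
  [IsTopologicalAddGroup E] [ContinuousSMul ℝ E]

theorem prodMk_zero_mem_asymptoticCone_of_isBounded [NormedAddCommGroup F] [NormedSpace ℝ F]
    {A : Set (E × F)} {B : Set F} (hB : Bornology.IsBounded B) {d : E}
    (hd : d ∈ asymptoticCone ℝ {x | ∃ y ∈ B, (x, y) ∈ A}) : (d, 0) ∈ asymptoticCone ℝ A := by
  obtain ⟨R, hR⟩ := hB.exists_norm_le
  rw [mem_asymptoticCone_iff, AffineSpace.asymptoticNhds_eq_smul, ← map₂_smul,
    ← map_prod_eq_map₂, frequently_map] at hd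
  set S := {q : ℝ × E | ∃ y ∈ B, (q.1 • q.2, y) ∈ A}
  have : ((atTop ×ˢ nhds d) ⊓ 𝓟 S).NeBot := frequently_mem_iff_neBot.1 hd
  choose! y hyB hyA using fun (q : ℝ × E) (hq : q ∈ S) => hq
  set l := (atTop ×ˢ nhds d) ⊓ 𝓟 S
  have hS : ∀ᶠ q in l, q ∈ S := eventually_inf_principal.2 (.of_forall fun _ => id)
  have htime : Tendsto Prod.fst l atTop := tendsto_fst.mono_left inf_le_left
  have hdir : Tendsto Prod.snd l (nhds d) := tendsto_snd.mono_left inf_le_left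
  have hbdd : IsBoundedUnder (· ≤ ·) l (norm ∘ y) :=
    isBoundedUnder_of_eventually_le (hS.mono fun q hq => hR _ (hyB q hq))
  have hvanish : Tendsto (fun q => q.1⁻¹ • y q) l (nhds 0) :=
    (tendsto_inv_atTop_zero.comp htime).zero_smul_isBoundedUnder_le hbdd
  refine (htime.atTop_smul_nhds_tendsto_asymptoticNhds (hdir.prodMk_nhds hvanish)).frequently
    (Eventually.frequently ?_)
  filter_upwards [hS, htime.eventually_ne_atTop 0] with q hq hq0
  simpa only [Prod.smul_mk, smul_inv_smul₀ hq0] using hyA q hq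

theorem prodMk_add_smul_mem_of_mem_asymptoticCone [AddCommGroup F] [Module ℝ F]
    [TopologicalSpace F] [IsTopologicalAddGroup F] [ContinuousSMul ℝ F] {A : Set (E × F)}
    (hcl : IsClosed A) (hcv : Convex ℝ A) {d : E} (hd : (d, 0) ∈ asymptoticCone ℝ A)
    {x : E} {y : F} (hxy : (x, y) ∈ A) {t : ℝ} (ht : 0 ≤ t) : (x + t • d, y) ∈ A := by
  simpa [add_comm] using hcv.smul_vadd_mem_of_isClosed_of_mem_asymptoticCone hcl ht hd hxy

end AsymptoticCone

section ConstraintRecessionCone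

/-- The recession cone `D` of the constraints, for a constraint set `A` of pairs of a point and a
perturbation: the directions of rays along which some perturbation stays feasible. -/
def constraintRecessionCone {E Y : Type*} [AddCommGroup E] [Module ℝ E] (A : Set (E × Y)) :
    Set E :=
  {d | ∃ (s : Y) (x : E), ∀ t : ℝ, 0 ≤ t → (x + t • d, s) ∈ A}

variable {E Y : Type*} [AddCommGroup E] [Module ℝ E] [TopologicalSpace E]
  [IsTopologicalAddGroup E] [ContinuousSMul ℝ E] [AddCommGroup Y] [Module ℝ Y]
  [TopologicalSpace Y] [IsTopologicalAddGroup Y] [ContinuousSMul ℝ Y]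

theorem mem_constraintRecessionCone_iff {A : Set (E × Y)} (hcl : IsClosed A) (hcv : Convex ℝ A)
    {d : E} : d ∈ constraintRecessionCone A ↔ (d, 0) ∈ asymptoticCone ℝ A := by
  constructor
  · rintro ⟨s, x, hray⟩
    refine mem_asymptoticCone_of_forall_smul_vadd_mem (p := (x, s)) fun t ht => ?_
    simpa [add_comm] using hray t ht
  · intro hd
    obtain ⟨⟨x, s⟩, hxs⟩ := asymptoticCone_nonempty.1 ⟨_, hd⟩
    exact ⟨s, x, fun _ => prodMk_add_smul_mem_of_mem_asymptoticCone hcl hcv hd hxs⟩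

end ConstraintRecessionCone

section RecessionDirection

/-- The epigraph of an extended real function, as a subset of `E × ℝ`. Unlike in `E × EReal`, its
convexity makes sense. -/
def realEpigraph {E : Type*} (f : E → EReal) : Set (E × ℝ) :=
  {p | f p.1 ≤ p.2}

theorem isClosed_realEpigraph {E : Type*} [TopologicalSpace E] {f : E → EReal}
    (hf : LowerSemicontinuous f) : IsClosed (realEpigraph f) :=
  hf.isClosed_epigraph.preimage (continuous_id.prodMap continuous_coe_real_ereal)

theorem convex_realEpigraph {E : Type*} [AddCommMonoid E] [SMul ℝ E] {f : E → EReal}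
    (hf : ∀ x y : E, ∀ a b : ℝ, 0 ≤ a → 0 ≤ b → a + b = 1 →
      f (a • x + b • y) ≤ (a : EReal) * f x + (b : EReal) * f y) :
    Convex ℝ (realEpigraph f) := by
  rintro ⟨x, r⟩ (hx : f x ≤ r) ⟨y, s⟩ (hy : f y ≤ s) a b ha hb hab
  calc
    f (a • x + b • y) ≤ (a : EReal) * f x + (b : EReal) * f y := hf x y a b ha hb hab
    _ ≤ (a : EReal) * r + (b : EReal) * s := by gcongr
    _ = ((a * r + b * s : ℝ) : EReal) := by push_cast; rfl

/-- `d` is a recession direction of `f`: along `d`, `f` is nonincreasing from every point of its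
effective domain. -/
def IsRecessionDirection {E : Type*} [AddCommGroup E] [Module ℝ E] (f : E → EReal) (d : E) :
    Prop :=
  ∀ x : E, f x ≠ ⊤ → ∀ t₁ t₂ : ℝ, 0 ≤ t₁ → t₁ ≤ t₂ → f (x + t₂ • d) ≤ f (x + t₁ • d)

theorem isRecessionDirection_of_mem_asymptoticCone_realEpigraph {E : Type*} [AddCommGroup E]
    [Module ℝ E] [TopologicalSpace E] [IsTopologicalAddGroup E] [ContinuousSMul ℝ E]
    {f : E → EReal} (hlsc : LowerSemicontinuous f) (hcvx : Convex ℝ (realEpigraph f)) {d : E}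
    (hd : (d, 0) ∈ asymptoticCone ℝ (realEpigraph f)) : IsRecessionDirection f d := by
  intro x _ t₁ t₂ _ ht
  refine EReal.le_of_forall_lt_iff_le.1 fun r hr => ?_
  have hmem : (x + t₁ • d + (t₂ - t₁) • d, r) ∈ realEpigraph f :=
    prodMk_add_smul_mem_of_mem_asymptoticCone (isClosed_realEpigraph hlsc) hcvx hd hr.le
      (sub_nonneg.2 ht)
  rwa [add_assoc, ← add_smul, add_sub_cancel] at hmem

end RecessionDirection

section LevelBounded

/-- The sublevel set of `f` at level `c` on the points feasible for some perturbation in `V`. -/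
def perturbedSublevel {E Y : Type*} (f : E → EReal) (A : Set (E × Y)) (V : Set Y) (c : ℝ) :
    Set E :=
  {x | (∃ v ∈ V, (x, v) ∈ A) ∧ f x ≤ c}

/-- `f` is level bounded with respect to perturbations of the constraint set `A`. The neighborhood
`V` may depend on `s`, but not on the level `c`. -/
def IsLevelBoundedUnderPerturbation {E Y : Type*} [Bornology E] [TopologicalSpace Y]
    (f : E → EReal) (A : Set (E × Y)) : Prop :=
  ∀ s : Y, ∃ V ∈ nhds s, ∀ c : ℝ, Bornology.IsBounded (perturbedSublevel f A V c)

variable {E Y : Type*} {f : E → EReal} {A : Set (E × Y)}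

theorem asymptoticCone_perturbedSublevel_subset [AddCommGroup E] [Module ℝ E] [TopologicalSpace E]
    [IsTopologicalAddGroup E] [ContinuousSMul ℝ E] [NormedAddCommGroup Y] [NormedSpace ℝ Y]
    (hAcl : IsClosed A) (hAcv : Convex ℝ A)
    (hlsc : LowerSemicontinuous f) (hcvx : Convex ℝ (realEpigraph f))
    {V : Set Y} (hV : Bornology.IsBounded V) (c : ℝ) :
    asymptoticCone ℝ (perturbedSublevel f A V c) ⊆
      constraintRecessionCone A ∩ {d | IsRecessionDirection f d} := by
  intro d hd
  have hA : (d, 0) ∈ asymptoticCone ℝ A :=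
    prodMk_zero_mem_asymptoticCone_of_isBounded hV (asymptoticCone_mono (fun _ hx => hx.1) hd)
  have hf : (d, 0) ∈ asymptoticCone ℝ (realEpigraph f) :=
    have hsub : perturbedSublevel f A V c ⊆ {x | ∃ r ∈ ({c} : Set ℝ), (x, r) ∈ realEpigraph f} :=
      fun _ hx => ⟨c, rfl, hx.2⟩
    prodMk_zero_mem_asymptoticCone_of_isBounded Bornology.isBounded_singleton
      (asymptoticCone_mono hsub hd)
  exact ⟨(mem_constraintRecessionCone_iff hAcl hAcv).2 hA,
    isRecessionDirection_of_mem_asymptoticCone_realEpigraph hlsc hcvx hf⟩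

theorem mem_asymptoticCone_perturbedSublevel [AddCommGroup E] [Module ℝ E] [TopologicalSpace E]
    [IsTopologicalAddGroup E] [ContinuousSMul ℝ E] [AddCommGroup Y] [Module ℝ Y]
    [TopologicalSpace Y] [IsTopologicalAddGroup Y] [ContinuousSMul ℝ Y]
    (hAcl : IsClosed A) (hAcv : Convex ℝ A) {d : E} (hdA : d ∈ constraintRecessionCone A)
    (hdf : IsRecessionDirection f d) {V : Set Y} {c : ℝ}
    (hne : (perturbedSublevel f A V c).Nonempty) :
    d ∈ asymptoticCone ℝ (perturbedSublevel f A V c) := by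
  obtain ⟨x, ⟨v, hv, hxv⟩, hfx⟩ := hne
  have hdA' := (mem_constraintRecessionCone_iff hAcl hAcv).1 hdA
  refine mem_asymptoticCone_of_forall_smul_vadd_mem (p := x) fun t ht => ?_
  rw [vadd_eq_add, add_comm]
  have hdecr : f (x + t • d) ≤ f x := by
    simpa using hdf x (hfx.trans_lt (EReal.coe_lt_top c)).ne 0 t le_rfl ht
  exact ⟨⟨v, hv, prodMk_add_smul_mem_of_mem_asymptoticCone hAcl hAcv hdA' hxv ht⟩,
    hdecr.trans hfx⟩

end LevelBounded

theorem statement15_general {E Y : Type*}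
    [NormedAddCommGroup E] [NormedSpace ℝ E] [FiniteDimensional ℝ E]
    [NormedAddCommGroup Y] [NormedSpace ℝ Y] {f : E → EReal} {A : Set (E × Y)}
    (hAcl : IsClosed A) (hAcv : Convex ℝ A)
    (hlsc : LowerSemicontinuous f) (hcvx : Convex ℝ (realEpigraph f))
    (hfeas : ∃ p ∈ A, f p.1 ≠ ⊤) :
    (∀ d : E, d ≠ 0 → d ∈ constraintRecessionCone A → ¬ IsRecessionDirection f d) ↔
      IsLevelBoundedUnderPerturbation f A := by
  constructor
  · refine fun hnone s => ⟨_, Metric.closedBall_mem_nhds s one_pos, fun c => ?_⟩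
    by_contra hunbdd
    obtain ⟨d, hd0, hd⟩ := not_bounded_iff_exists_ne_zero_mem_asymptoticCone.1 hunbdd
    obtain ⟨hdA, hdf⟩ := asymptoticCone_perturbedSublevel_subset hAcl hAcv hlsc hcvx
      Metric.isBounded_closedBall c hd
    exact hnone d hd0 hdA hdf
  · intro hbdd d hd0 hdA hdf
    obtain ⟨⟨x, s⟩, hxs, hfx⟩ := hfeas
    obtain ⟨V, hV, hVbdd⟩ := hbdd s
    obtain ⟨c, hc, -⟩ := EReal.lt_iff_exists_real_btwn.1 (lt_top_iff_ne_top.2 hfx)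
    exact hd0 <| asymptoticCone_subset_singleton_of_bounded (hVbdd c) <|
      mem_asymptoticCone_perturbedSublevel hAcl hAcv hdA hdf
        ⟨x, ⟨s, mem_of_mem_nhds hV, hxs⟩, hc.le⟩

theorem statement15
    {E Y : Type*}
    [NormedAddCommGroup E] [InnerProductSpace ℝ E] [FiniteDimensional ℝ E]
    [NormedAddCommGroup Y] [InnerProductSpace ℝ Y] [FiniteDimensional ℝ Y]
    (X : Set E) (hXne : X.Nonempty) (hXcl : IsClosed X) (hXcv : Convex ℝ X)
    (K : Set Y) (hKne : K.Nonempty) (hKcl : IsClosed K) (hKcv : Convex ℝ K)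
    (f : E → EReal)
    (hf_bot : ∀ x : E, f x ≠ ⊥) (hf_top : ∃ x ∈ X, f x ≠ ⊤)
    (hf_dom : ∀ x : E, x ∉ X → f x = ⊤)
    (hf_lsc : LowerSemicontinuous f)
    (hf_cvx : ∀ x y : E, ∀ a b : ℝ, 0 ≤ a → 0 ≤ b → a + b = 1 →
      f (a • x + b • y) ≤ (a : EReal) * f x + (b : EReal) * f y)
    (C : E → Y) (CC : Set (E × Y))
    (hCC : ∀ (x : E) (sv : Y), (x, sv) ∈ CC ↔ x ∈ X ∧ ∃ yv ∈ K, sv = C x - yv)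
    (hCCne : CC.Nonempty) (hCCcl : IsClosed CC) (hCCcv : Convex ℝ CC) :
    ((∀ d : E, d ≠ 0 →
          (∃ (sv : Y) (x0 : E), ∀ t : ℝ, 0 ≤ t → (x0 + t • d, sv) ∈ CC) →
          ¬ (∀ x0 : E, f x0 ≠ ⊤ → ∀ t1 t2 : ℝ, 0 ≤ t1 → t1 ≤ t2 →
              f (x0 + t2 • d) ≤ f (x0 + t1 • d)))
      ↔ (∀ sv : Y, ∃ V ∈ nhds sv, ∀ c : ℝ,
          Bornology.IsBounded {x' : E | (∃ v ∈ V, (x', v) ∈ CC) ∧ f x' ≤ (c : EReal)})) := by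
  obtain ⟨x, hxX, hfx⟩ := hf_top
  obtain ⟨k, hk⟩ := hKne
  exact statement15_general hCCcl hCCcv hf_lsc (convex_realEpigraph hf_cvx)
    ⟨(x, C x - k), (hCC _ _).2 ⟨hxX, k, hk, rfl⟩, hfx⟩
end
end
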